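/- Let α, β > −1 be real numbers and n a nonnegative integer. Then for every x ∈ (−1,1), the multiplicative Rodrigues formula holds: exp(P_n^{(α,β)}(x)) = exp( ( (−1)^n n! 2^n (1−x)^α(1+x)^β )^{−1} · (d^n/dx^n)[ (1−x)^{n+α} (1+x)^{n+β} ] ); equivalently, P_n^{(α,β)}(x) = ( (−1)^n n! 2^n ω(x) )^{−1} · (d^n/dx^n)[ (1−x²)^n ω(x) ] with ω(x) = (1−x)^α(1+x)^β. -/

import Mathlib

/-- Pochhammer symbol `(a)ₖ = a(a+1)⋯(a+k−1)` for a real number `a`. -/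
noncomputable def poch (a : ℝ) (k : ℕ) : ℝ := ∏ j ∈ Finset.range k, (a + j)

/-- The Jacobi polynomial `P_n^{(α,β)}` as a real function, defined by the explicit
representation `P_n^{(α,β)}(x) = (1/n!)[(α+1)_n + Σ_{k=1}^{n} C(n,k) (α+β+n+1)_k
((α+1)_n/(α+1)_k) ((x−1)/2)^k]` for `n ≥ 1`, and `P_0^{(α,β)} = 1`. -/
noncomputable def jacobiP (α β : ℝ) (n : ℕ) : ℝ → ℝ := fun x =>
  if n = 0 then 1 else
    (1 / (n.factorial : ℝ)) *
      (poch (α + 1) n + ∑ k ∈ Finset.Icc 1 n,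
        (n.choose k : ℝ) * poch (α + β + n + 1) k * (poch (α + 1) n / poch (α + 1) k)
          * ((x - 1) / 2) ^ k)

/-!
Write `ω_{a,b}(x) = (1 - x)^a (1 + x)^b`. For every polynomial `p`, differentiating
`ω_{a+1,b+1}(x) p((x - 1) / 2)` gives `-2 ω_{a,b}(x) q((x - 1) / 2)`, where `q` is a polynomial
depending linearly on `p`. Comparing coefficients shows that `p ↦ q` carries the normalized Jacobi
polynomial of degree `m` with parameters `(a + 1, b + 1)` to the one of degree `m + 1` with
parameters `(a, b)`. Starting from `p = 1` and `ω_{a+n,b+n}`, Rodrigues' formula follows by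
differentiating `n` times.
-/

open Polynomial

lemma cast_choose_succ_mul_succ (R : Type*) [Ring R] (m k : ℕ) :
    (m.choose (k + 1) : R) * (k + 1) = m.choose k * (m - k) := by
  rcases le_or_gt k m with hk | hk
  · rw [← Nat.cast_sub hk]
    exact_mod_cast congrArg (Nat.cast : ℕ → R) (Nat.choose_succ_right_eq m k)
  · simp [Nat.choose_eq_zero_of_lt hk, Nat.choose_eq_zero_of_lt (hk.trans k.lt_succ_self)]

lemma poch_zero (a : ℝ) : poch a 0 = 1 := Finset.prod_range_zero _

lemma poch_succ (a : ℝ) (k : ℕ) : poch a (k + 1) = poch a k * (a + k) :=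
  Finset.prod_range_succ _ _

lemma poch_add (a : ℝ) (k l : ℕ) : poch a (k + l) = poch a k * poch (a + k) l := by
  simp only [poch, Finset.prod_range_add, Nat.cast_add, add_assoc]

lemma poch_succ_left (a : ℝ) (k : ℕ) : poch a (k + 1) = a * poch (a + 1) k := by
  rw [add_comm k, poch_add, poch_succ, poch_zero, Nat.cast_zero, Nat.cast_one, one_mul, add_zero]

lemma poch_pos {a : ℝ} (ha : 0 < a) (k : ℕ) : 0 < poch a k :=
  Finset.prod_pos fun j _ => by positivity

/-- The Jacobi weight `(1 - x)^a (1 + x)^b`, for arbitrary real exponents and with the convention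
`Real.rpow` at negative bases outside `[-1, 1]`. -/
noncomputable def jacobiWeight (a b x : ℝ) : ℝ := (1 - x) ^ a * (1 + x) ^ b

lemma jacobiWeight_pos (a b : ℝ) {x : ℝ} (hx : x ∈ Set.Ioo (-1 : ℝ) 1) : 0 < jacobiWeight a b x :=
  mul_pos (Real.rpow_pos_of_pos (by linarith [hx.2]) a)
    (Real.rpow_pos_of_pos (by linarith [hx.1]) b)

/-- The raising operator of the Jacobi polynomials in the variable `X = (x - 1) / 2`: up to the
factor `-2`, it is differentiation with respect to `x` conjugated by the weights with exponents
`(a + 1, b + 1)` and `(a, b)`. -/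
noncomputable def jacobiRaising (a b : ℝ) (p : ℝ[X]) : ℝ[X] :=
  (C (a + 1) + C (a + b + 2) * X) * p + X * (1 + X) * derivative p

lemma hasDerivAt_jacobiWeight_mul_eval (a b : ℝ) (p : ℝ[X]) {x : ℝ} (hx : x ≠ 1) (hx' : x ≠ -1) :
    HasDerivAt (fun t => jacobiWeight (a + 1) (b + 1) t * p.eval ((t - 1) / 2))
      (-2 * (jacobiWeight a b x * (jacobiRaising a b p).eval ((x - 1) / 2))) x := by
  have hsub : 1 - x ≠ 0 := sub_ne_zero.mpr hx.symm
  have hadd : 1 + x ≠ 0 := fun h => hx' (by linarith)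
  have hleft : HasDerivAt (fun t : ℝ => (1 - t) ^ (a + 1)) (-(a + 1) * (1 - x) ^ a) x := by
    simpa using ((hasDerivAt_id x).const_sub 1).rpow_const (p := a + 1) (Or.inl hsub)
  have hright : HasDerivAt (fun t : ℝ => (1 + t) ^ (b + 1)) ((b + 1) * (1 + x) ^ b) x := by
    simpa using ((hasDerivAt_id x).const_add 1).rpow_const (p := b + 1) (Or.inl hadd)
  have hpoly : HasDerivAt (fun t => p.eval ((t - 1) / 2))
      ((derivative p).eval ((x - 1) / 2) * (1 / 2)) x :=
    (p.hasDerivAt _).comp x (((hasDerivAt_id' x).sub_const 1).div_const 2)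
  refine ((hleft.mul hright).mul hpoly).congr_deriv ?_
  simp only [Pi.mul_apply, jacobiWeight, jacobiRaising, eval_add, eval_mul, eval_C, eval_X,
    eval_one, Real.rpow_add_one hsub, Real.rpow_add_one hadd]
  ring

lemma coeff_zero_jacobiRaising (a b : ℝ) (p : ℝ[X]) :
    (jacobiRaising a b p).coeff 0 = (a + 1) * p.coeff 0 := by
  simp [jacobiRaising, mul_coeff_zero]

lemma coeff_succ_jacobiRaising (a b : ℝ) (p : ℝ[X]) (k : ℕ) :
    (jacobiRaising a b p).coeff (k + 1) =
      (a + 2 + k) * p.coeff (k + 1) + (a + b + 2 + k) * p.coeff k := by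
  have hexpand : jacobiRaising a b p = C (a + 1) * p + C (a + b + 2) * (X * p) +
      X * (derivative p + X * derivative p) := by
    rw [jacobiRaising]
    ring
  have hderiv : (X * derivative p).coeff k = k * p.coeff k := by
    cases k with
    | zero => simp
    | succ k => rw [coeff_X_mul, coeff_derivative, Nat.cast_add_one, mul_comm]
  rw [hexpand]
  simp only [coeff_add, coeff_C_mul, coeff_X_mul, hderiv, coeff_derivative]
  ring

/-- The polynomial `n! P_n^{(a,b)}(1 + 2X)`. Its coefficients contain `(a + 1 + k)_{n-k}` in place
of the quotient `(a + 1)_n / (a + 1)_k`, so that no restriction on `a` is needed. -/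
noncomputable def shiftedJacobi (n : ℕ) (a b : ℝ) : ℝ[X] :=
  ∑ k ∈ Finset.range (n + 1),
    C ((n.choose k : ℝ) * poch (a + b + n + 1) k * poch (a + 1 + k) (n - k)) * X ^ k

lemma coeff_shiftedJacobi (n : ℕ) (a b : ℝ) (k : ℕ) :
    (shiftedJacobi n a b).coeff k =
      (n.choose k : ℝ) * poch (a + b + n + 1) k * poch (a + 1 + k) (n - k) := by
  simp only [shiftedJacobi, finsetSum_coeff, coeff_C_mul_X_pow, Finset.sum_ite_eq,
    Finset.mem_range, ite_eq_left_iff]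
  intro hk
  rw [Nat.choose_eq_zero_of_lt (by omega), Nat.cast_zero, zero_mul, zero_mul]

lemma shiftedJacobi_zero (a b : ℝ) : shiftedJacobi 0 a b = 1 := by
  simp [shiftedJacobi, poch_zero]

lemma choose_succ_mul_poch_sub (m k : ℕ) (z : ℝ) :
    (m.choose (k + 1) : ℝ) * poch z (m - k) =
      m.choose (k + 1) * (z * poch (z + 1) (m - (k + 1))) := by
  rcases lt_or_ge k m with hk | hk
  · rw [← poch_succ_left, show m - (k + 1) + 1 = m - k by omega]
  · simp [Nat.choose_eq_zero_of_lt (Nat.lt_succ_of_le hk)]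

lemma choose_succ_succ_mul_poch_mul_poch (m k : ℕ) (s z : ℝ) :
    ((m + 1).choose (k + 1) : ℝ) * poch s (k + 1) * poch z (m - k) =
      z * (m.choose (k + 1) * poch (s + 1) (k + 1) * poch (z + 1) (m - (k + 1))) +
        (s - m + k) * (m.choose k * poch (s + 1) k * poch z (m - k)) := by
  rw [Nat.choose_succ_succ, Nat.cast_add, poch_succ_left s, poch_succ (s + 1)]
  linear_combination poch (s + 1) k * (s + 1 + k) * choose_succ_mul_poch_sub m k z -
    poch (s + 1) k * poch z (m - k) * cast_choose_succ_mul_succ ℝ m k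

lemma shiftedJacobi_succ (m : ℕ) (a b : ℝ) :
    shiftedJacobi (m + 1) a b = jacobiRaising a b (shiftedJacobi m (a + 1) (b + 1)) := by
  ext k
  cases k with
  | zero =>
    simp only [coeff_zero_jacobiRaising, coeff_shiftedJacobi, Nat.choose_zero_right, poch_zero,
      Nat.sub_zero, Nat.cast_zero, add_zero, poch_succ_left (a + 1)]
    ring
  | succ k =>
    rw [coeff_succ_jacobiRaising, coeff_shiftedJacobi, coeff_shiftedJacobi, coeff_shiftedJacobi,
      Nat.add_sub_add_right, show a + b + (m + 1 : ℕ) + 1 = a + b + 2 + m by push_cast; ring,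
      show a + 1 + (b + 1) + m + 1 = a + b + 2 + m + 1 by ring,
      show a + 1 + (k + 1 : ℕ) = a + 2 + k by push_cast; ring,
      show a + 1 + 1 + (k + 1 : ℕ) = a + 2 + k + 1 by push_cast; ring,
      show a + 1 + 1 + (k : ℝ) = a + 2 + k by ring, choose_succ_succ_mul_poch_mul_poch]
    ring

lemma eval_shiftedJacobi (n : ℕ) (a b y : ℝ) :
    (shiftedJacobi n a b).eval y = poch (a + 1) n + ∑ k ∈ Finset.Icc 1 n,
      (n.choose k : ℝ) * poch (a + b + n + 1) k * poch (a + 1 + k) (n - k) * y ^ k := by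
  rw [shiftedJacobi, Finset.sum_range_eq_add_Ico _ n.add_one_pos, Finset.Ico_add_one_right_eq_Icc]
  simp [eval_finsetSum, poch_zero]

lemma jacobiP_eq_eval_shiftedJacobi {a : ℝ} {n : ℕ} (ha : poch (a + 1) n ≠ 0) (b x : ℝ) :
    jacobiP a b n x = (n.factorial : ℝ)⁻¹ * (shiftedJacobi n a b).eval ((x - 1) / 2) := by
  rcases eq_or_ne n 0 with rfl | hn
  · simp [jacobiP, shiftedJacobi_zero]
  have hquot : ∀ k ≤ n, poch (a + 1) n / poch (a + 1) k = poch (a + 1 + k) (n - k) := by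
    intro k hk
    have hsplit : poch (a + 1) n = poch (a + 1) k * poch (a + 1 + k) (n - k) := by
      rw [← poch_add, Nat.add_sub_cancel' hk]
    rw [hsplit, mul_div_cancel_left₀ _ (left_ne_zero_of_mul (hsplit ▸ ha))]
  have hsum : ∑ k ∈ Finset.Icc 1 n, (n.choose k : ℝ) * poch (a + b + n + 1) k *
        (poch (a + 1) n / poch (a + 1) k) * ((x - 1) / 2) ^ k =
      ∑ k ∈ Finset.Icc 1 n, (n.choose k : ℝ) * poch (a + b + n + 1) k *
        poch (a + 1 + k) (n - k) * ((x - 1) / 2) ^ k :=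
    Finset.sum_congr rfl fun k hk => by rw [hquot k (Finset.mem_Icc.mp hk).2]
  rw [eval_shiftedJacobi, ← hsum, jacobiP, if_neg hn, one_div]

lemma iteratedDeriv_jacobiWeight (n : ℕ) (a b : ℝ) {x : ℝ} (hx : x ≠ 1) (hx' : x ≠ -1) :
    iteratedDeriv n (jacobiWeight (n + a) (n + b)) x =
      (-2) ^ n * (jacobiWeight a b x * (shiftedJacobi n a b).eval ((x - 1) / 2)) := by
  induction n generalizing a b x with
  | zero => simp [shiftedJacobi_zero]
  | succ m ih =>
    have hexp (c : ℝ) : ((m + 1 : ℕ) : ℝ) + c = m + (c + 1) := by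
      push_cast
      ring
    have hev : iteratedDeriv m (jacobiWeight (m + (a + 1)) (m + (b + 1))) =ᶠ[nhds x]
        fun t => (-2) ^ m * (jacobiWeight (a + 1) (b + 1) t *
          (shiftedJacobi m (a + 1) (b + 1)).eval ((t - 1) / 2)) := by
      filter_upwards [eventually_ne_nhds hx, eventually_ne_nhds hx'] with t ht ht'
      exact ih (a + 1) (b + 1) ht ht'
    rw [hexp, hexp, iteratedDeriv_succ, hev.deriv_eq,
      ((hasDerivAt_jacobiWeight_mul_eval a b _ hx hx').const_mul _).deriv, shiftedJacobi_succ,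
      pow_succ, mul_assoc]

theorem jacobiP_rodrigues_general {α : ℝ} {n : ℕ} (hα : poch (α + 1) n ≠ 0) (β : ℝ) {x : ℝ}
    (hx : x ≠ 1) (hx' : x ≠ -1) (hω : jacobiWeight α β x ≠ 0) :
    jacobiP α β n x = ((-1 : ℝ) ^ n * (n.factorial : ℝ) * 2 ^ n * (1 - x) ^ α * (1 + x) ^ β)⁻¹ *
      iteratedDeriv n (fun t : ℝ => (1 - t) ^ ((n : ℝ) + α) * (1 + t) ^ ((n : ℝ) + β)) x := by
  have hscale : (-1 : ℝ) ^ n * n.factorial * 2 ^ n * (1 - x) ^ α * (1 + x) ^ β =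
      n.factorial * ((-2) ^ n * jacobiWeight α β x) := by
    rw [neg_pow (2 : ℝ), jacobiWeight]
    ring
  have hfactor : (-2 : ℝ) ^ n * jacobiWeight α β x ≠ 0 :=
    mul_ne_zero (pow_ne_zero n (by norm_num)) hω
  change _ = _ * iteratedDeriv n (jacobiWeight (n + α) (n + β)) x
  rw [iteratedDeriv_jacobiWeight n α β hx hx', jacobiP_eq_eval_shiftedJacobi hα, hscale, mul_inv,
    ← mul_assoc ((-2) ^ n), mul_assoc, inv_mul_cancel_left₀ hfactor]

/-- The (multiplicative) Rodrigues formula: for `x ∈ (−1,1)`,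
`P_n^{(α,β)}(x) = ((−1)^n n! 2^n (1−x)^α (1+x)^β)⁻¹ · (dⁿ/dxⁿ)[(1−x)^{n+α}(1+x)^{n+β}]`,
equivalently `exp (P_n^{(α,β)}(x))` equals the exponential of the right-hand side. -/
theorem jacobiP_rodrigues (α β : ℝ) (hα : -1 < α) (hβ : -1 < β) (n : ℕ)
    (x : ℝ) (hx : x ∈ Set.Ioo (-1 : ℝ) 1) :
    Real.exp (jacobiP α β n x) =
      Real.exp (((-1 : ℝ) ^ n * (n.factorial : ℝ) * 2 ^ n * (1 - x) ^ α * (1 + x) ^ β)⁻¹ *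
        iteratedDeriv n (fun t : ℝ => (1 - t) ^ ((n : ℝ) + α) * (1 + t) ^ ((n : ℝ) + β)) x) := by
  exact congrArg Real.exp (jacobiP_rodrigues_general (poch_pos (by linarith) n).ne' β
    hx.2.ne hx.1.ne' (jacobiWeight_pos α β hx).ne')
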